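/- For probability measures P, Q on a common measurable space, the chi-squared divergence of the n-fold product measures satisfies χ²(P^n, Q^n) = (1 + χ²(P, Q))^n - 1. -/

import Mathlib

open MeasureTheory
open scoped ENNReal Classical

/-- Chi-squared divergence `χ²(P,Q) = ∫ (dP/dQ - 1)² dQ` when `P ≪ Q`, and `∞` otherwise. -/

noncomputable def chiSq {Ω : Type*} [MeasurableSpace Ω] (P Q : Measure Ω) : ℝ≥0∞ :=
  if P ≪ Q then ∫⁻ x, ENNReal.ofReal (((P.rnDeriv Q x).toReal - 1) ^ 2) ∂Q else ⊤

/-!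
Expanding the square gives `1 + χ²(P, Q) = ∫ (dP/dQ)² dQ` when `P ≪ Q`. The density of a product
measure is the product of the densities of its factors, so by Tonelli this second moment is
multiplicative. If `P i ≪ Q i` fails for some factor, it fails for the product too, and
both sides are infinite.
-/

section Pi

variable {ι : Type*} {X : ι → Type*}

theorem indicator_univ_pi_prod [Fintype ι] (s : ∀ i, Set (X i)) (f : ∀ i, X i → ℝ≥0∞)
    (x : ∀ i, X i) :
    (Set.univ.pi s).indicator (fun y ↦ ∏ i, f i (y i)) x = ∏ i, (s i).indicator (f i) (x i) := by
  simp only [Set.indicator_apply, Set.mem_univ_pi]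
  rw [Finset.prod_ite_zero]
  simp

variable [∀ i, MeasurableSpace (X i)]

theorem lmarginal_prod_eq_prod {μ : ∀ i, Measure (X i)} [∀ i, SigmaFinite (μ i)]
    {f : ∀ i, X i → ℝ≥0∞} (hf : ∀ i, Measurable (f i)) (s : Finset ι) (x : ∀ i, X i) :
    (∫⋯∫⁻_s, fun y ↦ ∏ i ∈ s, f i (y i) ∂μ) x = ∏ i ∈ s, ∫⁻ y, f i y ∂μ i := by
  induction s using Finset.induction_on with
  | empty => simp
  | insert i s hi ih =>
    have lintegral_update (y : ∀ j, X j) :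
        ∫⁻ t, ∏ j ∈ insert i s, f j (Function.update y i t j) ∂μ i
          = (∫⁻ t, f i t ∂μ i) * ∏ j ∈ s, f j (y j) := by
      rw [← lintegral_mul_const _ (hf i)]
      refine lintegral_congr fun t ↦ ?_
      rw [Finset.prod_insert hi, Function.update_self]
      congr 1
      exact Finset.prod_congr rfl fun j hj ↦ by
        rw [Function.update_of_ne (ne_of_mem_of_not_mem hj hi)]
    rw [lmarginal_insert' _ (by fun_prop) hi, Finset.prod_insert hi, ← ih]
    simp only [lintegral_update]
    exact lintegral_const_mul _ (by fun_prop)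

variable [Fintype ι]

theorem lintegral_fintype_prod_eq_prod {μ : ∀ i, Measure (X i)} [∀ i, SigmaFinite (μ i)]
    {f : ∀ i, X i → ℝ≥0∞} (hf : ∀ i, Measurable (f i)) :
    ∫⁻ x, ∏ i, f i (x i) ∂Measure.pi μ = ∏ i, ∫⁻ x, f i x ∂μ i := by
  rcases isEmpty_or_nonempty (∀ i, X i) with h_empty | ⟨⟨x⟩⟩
  · obtain ⟨i, hi⟩ := isEmpty_pi.1 h_empty
    rw [Measure.eq_zero_of_isEmpty (Measure.pi μ), lintegral_zero_measure,
      Finset.prod_eq_zero (Finset.mem_univ i)]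
    rw [Measure.eq_zero_of_isEmpty (μ i), lintegral_zero_measure]
  · rw [lintegral_eq_lmarginal_univ x, lmarginal_prod_eq_prod hf]

theorem pi_withDensity {μ : ∀ i, Measure (X i)} [∀ i, SigmaFinite (μ i)]
    {f : ∀ i, X i → ℝ≥0∞} [∀ i, SigmaFinite ((μ i).withDensity (f i))]
    (hf : ∀ i, Measurable (f i)) :
    Measure.pi (fun i ↦ (μ i).withDensity (f i))
      = (Measure.pi μ).withDensity fun x ↦ ∏ i, f i (x i) := by
  refine Measure.pi_eq fun s hs ↦ ?_
  have hs_pi : MeasurableSet (Set.univ.pi s) := .univ_pi hs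
  calc (Measure.pi μ).withDensity (fun x ↦ ∏ i, f i (x i)) (Set.univ.pi s)
      = ∫⁻ x, ∏ i, (s i).indicator (f i) (x i) ∂Measure.pi μ := by
        simp only [withDensity_apply _ hs_pi, ← lintegral_indicator hs_pi, indicator_univ_pi_prod]
    _ = ∏ i, ∫⁻ x, (s i).indicator (f i) x ∂μ i :=
        lintegral_fintype_prod_eq_prod fun i ↦ (hf i).indicator (hs i)
    _ = ∏ i, (μ i).withDensity (f i) (s i) := by
        simp only [withDensity_apply _ (hs _), lintegral_indicator (hs _)]

variable {P Q : ∀ i, Measure (X i)} [∀ i, SigmaFinite (P i)] [∀ i, SigmaFinite (Q i)]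

theorem pi_eq_withDensity_prod_rnDeriv (h : ∀ i, P i ≪ Q i) :
    Measure.pi P = (Measure.pi Q).withDensity fun x ↦ ∏ i, (P i).rnDeriv (Q i) (x i) := by
  rw [← pi_withDensity fun i ↦ Measure.measurable_rnDeriv (P i) (Q i)]
  simp only [Measure.withDensity_rnDeriv_eq _ _ (h _)]

theorem absolutelyContinuous_pi (h : ∀ i, P i ≪ Q i) : Measure.pi P ≪ Measure.pi Q := by
  rw [pi_eq_withDensity_prod_rnDeriv h]
  exact withDensity_absolutelyContinuous _ _

theorem absolutelyContinuous_of_pi [∀ i, NeZero (P i)] (h : Measure.pi P ≪ Measure.pi Q) (i : ι) :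
    P i ≪ Q i := by
  refine Measure.AbsolutelyContinuous.mk fun s _ hs ↦ ?_
  have cylinder_null : Measure.pi P (Function.eval i ⁻¹' s) = 0 :=
    h (Measure.pi_eval_preimage_null Q hs)
  rw [Set.eval_preimage, Measure.pi_pi, Finset.prod_eq_zero_iff] at cylinder_null
  obtain ⟨j, -, hj⟩ := cylinder_null
  obtain rfl | hji := eq_or_ne j i
  · rwa [Function.update_self] at hj
  · rw [Function.update_of_ne hji] at hj
    exact absurd (Measure.measure_univ_eq_zero.1 hj) (NeZero.ne (P j))

theorem rnDeriv_pi (h : ∀ i, P i ≪ Q i) :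
    (Measure.pi P).rnDeriv (Measure.pi Q)
      =ᵐ[Measure.pi Q] fun x ↦ ∏ i, (P i).rnDeriv (Q i) (x i) := by
  rw [pi_eq_withDensity_prod_rnDeriv h]
  exact Measure.rnDeriv_withDensity _ (by fun_prop)

end Pi

theorem ofReal_toReal_sub_one_sq_add_two_mul {a : ℝ≥0∞} (ha : a ≠ ∞) :
    ENNReal.ofReal ((a.toReal - 1) ^ 2) + 2 * a = a ^ 2 + 1 := by
  rw [← ENNReal.toReal_eq_toReal_iff' (by finiteness) (by finiteness),
    ENNReal.toReal_add (by finiteness) (by finiteness),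
    ENNReal.toReal_add (by finiteness) (by finiteness), ENNReal.toReal_ofReal (by positivity)]
  simp only [ENNReal.toReal_mul, ENNReal.toReal_pow, ENNReal.toReal_ofNat, ENNReal.toReal_one]
  ring

section ChiSq

variable {Ω : Type*} [MeasurableSpace Ω] {P Q : Measure Ω}

theorem chiSq_of_not_absolutelyContinuous (h : ¬ P ≪ Q) : chiSq P Q = ∞ := if_neg h

theorem chiSq_add_two_mul_measure_univ [SigmaFinite P] [P.HaveLebesgueDecomposition Q]
    (h : P ≪ Q) :
    chiSq P Q + 2 * P Set.univ = ∫⁻ x, P.rnDeriv Q x ^ 2 ∂Q + Q Set.univ := by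
  calc chiSq P Q + 2 * P Set.univ
      = ∫⁻ x, ENNReal.ofReal (((P.rnDeriv Q x).toReal - 1) ^ 2) + 2 * P.rnDeriv Q x ∂Q := by
        rw [lintegral_add_right _ (by fun_prop), lintegral_const_mul _ (by fun_prop),
          Measure.lintegral_rnDeriv h, chiSq, if_pos h]
    _ = ∫⁻ x, P.rnDeriv Q x ^ 2 + 1 ∂Q := by
        refine lintegral_congr_ae ?_
        filter_upwards [Measure.rnDeriv_ne_top P Q] with x hx
        exact ofReal_toReal_sub_one_sq_add_two_mul hx
    _ = ∫⁻ x, P.rnDeriv Q x ^ 2 ∂Q + Q Set.univ := by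
        rw [lintegral_add_right _ measurable_const, lintegral_one]

theorem one_add_chiSq_eq_lintegral_rnDeriv_sq [IsProbabilityMeasure P]
    [IsProbabilityMeasure Q] (h : P ≪ Q) :
    1 + chiSq P Q = ∫⁻ x, P.rnDeriv Q x ^ 2 ∂Q := by
  have expansion := chiSq_add_two_mul_measure_univ h
  rw [measure_univ, measure_univ, mul_one, ← one_add_one_eq_two, ← add_assoc] at expansion
  rw [add_comm]
  exact (ENNReal.add_left_inj ENNReal.one_ne_top).1 expansion

end ChiSq

theorem stmt_8_general {ι : Type*} [Fintype ι] {X : ι → Type*} [∀ i, MeasurableSpace (X i)]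
    (P Q : ∀ i, Measure (X i)) [∀ i, IsProbabilityMeasure (P i)]
    [∀ i, IsProbabilityMeasure (Q i)] :
    1 + chiSq (Measure.pi P) (Measure.pi Q) = ∏ i, (1 + chiSq (P i) (Q i)) := by
  by_cases h : ∀ i, P i ≪ Q i
  · calc 1 + chiSq (Measure.pi P) (Measure.pi Q)
        = ∫⁻ x, (Measure.pi P).rnDeriv (Measure.pi Q) x ^ 2 ∂Measure.pi Q :=
          one_add_chiSq_eq_lintegral_rnDeriv_sq (absolutelyContinuous_pi h)
      _ = ∫⁻ x, ∏ i, (P i).rnDeriv (Q i) (x i) ^ 2 ∂Measure.pi Q := by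
          refine lintegral_congr_ae ?_
          filter_upwards [rnDeriv_pi h] with x hx
          rw [hx, Finset.prod_pow]
      _ = ∏ i, ∫⁻ x, (P i).rnDeriv (Q i) x ^ 2 ∂Q i :=
          lintegral_fintype_prod_eq_prod fun i ↦
            (Measure.measurable_rnDeriv (P i) (Q i)).pow_const 2
      _ = ∏ i, (1 + chiSq (P i) (Q i)) := by
          simp only [one_add_chiSq_eq_lintegral_rnDeriv_sq (h _)]
  · have h_pi : ¬ Measure.pi P ≪ Measure.pi Q := fun hpi ↦ h (absolutelyContinuous_of_pi hpi)
    obtain ⟨i, hi⟩ := not_forall.1 h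
    have factor_le_prod : 1 + chiSq (P i) (Q i) ≤ ∏ j, (1 + chiSq (P j) (Q j)) :=
      Finset.single_le_prod' (f := fun j ↦ 1 + chiSq (P j) (Q j))
        (fun j _ ↦ le_self_add) (Finset.mem_univ i)
    rw [chiSq_of_not_absolutelyContinuous hi, add_top, top_le_iff] at factor_le_prod
    rw [chiSq_of_not_absolutelyContinuous h_pi, add_top, factor_le_prod]

/-- Tensorization: `χ²(Pⁿ, Qⁿ) = (1 + χ²(P,Q))ⁿ - 1`. -/
theorem stmt_8 {Ω : Type*} [MeasurableSpace Ω] (P Q : Measure Ω)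
    [IsProbabilityMeasure P] [IsProbabilityMeasure Q] (n : ℕ) :
    chiSq (Measure.pi fun _ : Fin n => P) (Measure.pi fun _ : Fin n => Q)
      = (1 + chiSq P Q) ^ n - 1 := by
  rw [← Fin.prod_const, ← stmt_8_general, ENNReal.add_sub_cancel_left ENNReal.one_ne_top]
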